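/- Let u be a vertex of a weighted graph G with neighbors v_1, ..., v_d and edge weights r_{u v_i}. For a Pauli string S^u_x = X_u · Π_i (Z_{v_i})^{x_i} with x ∈ F_2^d of even Hamming weight, and f(·) = (1/4)[H_p, [H_p, ·]], one has f(S^u_x) = c_{xx} S^u_x + 2 Σ_{y: |x⊕y|=2} c_{xy} S^u_y, where c_{xx} = Σ_i r_{u v_i}^2 and c_{xy} = Π_i (r_{u v_i})^{x_i ⊕ y_i}, and the sum ranges over even-weight vectors y differing from x in exactly two coordinates. -/

import Mathlib

/-- The Pauli `X` operator acting on qubit `u` (tensored with identity elsewhere),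
as a matrix on the computational basis `V → Bool`. -/
noncomputable def PX {V : Type*} [Fintype V] [DecidableEq V] (u : V) :
    Matrix (V → Bool) (V → Bool) ℂ :=
  fun s t => if s = Function.update t u (!(t u)) then 1 else 0

/-- The Pauli `Z` operator acting on qubit `u`. -/
noncomputable def PZ {V : Type*} [Fintype V] [DecidableEq V] (u : V) :
    Matrix (V → Bool) (V → Bool) ℂ :=
  Matrix.diagonal fun s => if s u then -1 else 1

/-- The operator `Z_u Z_v` associated with an unordered pair `{u, v}`. -/
noncomputable def PZZ {V : Type*} [Fintype V] [DecidableEq V] (e : Sym2 V) :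
    Matrix (V → Bool) (V → Bool) ℂ :=
  Sym2.lift ⟨fun a b => PZ a * PZ b, fun a b => by
    show PZ a * PZ b = PZ b * PZ a
    unfold PZ
    rw [Matrix.diagonal_mul_diagonal, Matrix.diagonal_mul_diagonal,
      show (fun i : V → Bool => (if i a = true then (-1 : ℂ) else 1) *
          if i b = true then -1 else 1) =
        (fun i : V → Bool => (if i b = true then (-1 : ℂ) else 1) *
          if i a = true then -1 else 1) from funext fun i => mul_comm _ _]⟩ e

/-- The weighted problem Hamiltonian `H_p = Σ_{(u,v)∈E} r_{uv} Z_u Z_v`. -/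
noncomputable def HpW {V : Type*} [Fintype V] [DecidableEq V] (G : SimpleGraph V)
    [DecidableRel G.Adj] (r : Sym2 V → ℝ) : Matrix (V → Bool) (V → Bool) ℂ :=
  ∑ e ∈ G.edgeFinset, (r e : ℂ) • PZZ e

/-- The XZ star `S^u_x = X_u · Π_i (Z_{nbr i})^{x_i}`, where `nbr` enumerates the
neighbors of `u`. -/
noncomputable def evenStar {V : Type*} [Fintype V] [DecidableEq V] (u : V) {d : ℕ}
    (nbr : Fin d → V) (x : Fin d → Bool) : Matrix (V → Bool) (V → Bool) ℂ :=
  PX u * Matrix.diagonal fun s =>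
    ∏ i : Fin d, if x i then (if s (nbr i) then (-1 : ℂ) else 1) else 1

/-!
Conjugation by `X_u` flips the bit `u`, so the commutator of `diag h` with `X_u · diag g` is
`X_u · diag ((h ∘ flip_u - h) * g)`. For the energy `h` of `H_p`, only the edges at `u` contribute
to `h ∘ flip_u - h`, which is `-2 Z_u Σ_i r_i Z_{v_i}`. As `Z_u ^ 2 = 1`, the map `f` multiplies `g`
by `(Σ_i r_i Z_{v_i}) ^ 2 = Σ_i r_i ^ 2 + 2 Σ_{i < j} r_i r_j Z_{v_i} Z_{v_j}`, and multiplying a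
`Z`-string by `Z_{v_i} Z_{v_j}` toggles its exponents at `i` and `j`.
-/

section BoolMonomial

variable {ι : Type*} [Fintype ι]

theorem sq_sum_eq_sum_sq_add_two_mul_sum_powersetCard {R : Type*} [CommRing R] (a : ι → R) :
    (∑ i, a i) ^ 2 =
      ∑ i, a i ^ 2 + 2 * ∑ t ∈ Finset.univ.powersetCard 2, ∏ i ∈ t, a i := by
  have newton := congrArg (MvPolynomial.aeval a)
    (MvPolynomial.psum_eq_mul_esymm_sub_sum ι ℤ 2 two_pos)
  have indices : (Finset.HasAntidiagonal.antidiagonal 2).filter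
      (fun p : ℕ × ℕ => p.1 ∈ Set.Ioo 0 2) = {(1, 1)} := by
    decide
  simp only [indices, Finset.sum_singleton, MvPolynomial.psum, MvPolynomial.esymm, map_sub,
    map_mul, map_sum, map_prod, map_pow, map_neg, map_one, map_natCast, MvPolynomial.aeval_X,
    Finset.powersetCard_one, Finset.sum_map, Function.Embedding.coeFn_mk, Finset.prod_singleton,
    pow_one] at newton
  push_cast at newton
  linear_combination -newton

theorem sum_hammingDist_eq_sum_powersetCard [DecidableEq ι] {M : Type*} [AddCommMonoid M]
    (k : ℕ) (x : ι → Bool) (F : Finset ι → M) :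
    ∑ y with hammingDist x y = k, F (Finset.univ.filter fun i => x i ≠ y i) =
      ∑ t ∈ Finset.univ.powersetCard k, F t := by
  have ne_toggle (t : Finset ι) (i : ι) : x i ≠ (x i ^^ decide (i ∈ t)) ↔ i ∈ t := by
    cases x i <;> simp
  refine Finset.sum_bij' (fun y _ => Finset.univ.filter fun i => x i ≠ y i)
    (fun t _ i => x i ^^ decide (i ∈ t)) ?_ ?_ ?_ ?_ fun _ _ => rfl
  · intro y hy
    simpa [hammingDist] using hy
  · intro t ht
    simpa only [hammingDist, ne_toggle, Finset.mem_filter_univ, Finset.filter_univ_mem,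
      Finset.mem_powersetCard_univ] using ht
  · intro y _
    funext i
    cases hx : x i <;> cases hy : y i <;> simp [hx, hy]
  · intro t _
    simp only [ne_toggle, Finset.filter_univ_mem]

/-- The monomial `∏ i, z i ^ x i` with exponent vector `x ∈ 𝔽₂^ι`, which is encoded as a Boolean
vector. For `z i = Z_{v_i}` it is the `Z`-string of a star. -/
def boolMonomial {R : Type*} [CommMonoid R] (x : ι → Bool) (z : ι → R) : R :=
  ∏ i, if x i then z i else 1

theorem prod_ne_mul_boolMonomial {R : Type*} [CommMonoid R] {z : ι → R}
    (hz : ∀ i, z i ^ 2 = 1) (x y : ι → Bool) :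
    (∏ i with x i ≠ y i, z i) * boolMonomial x z = boolMonomial y z := by
  rw [Finset.prod_filter, boolMonomial, ← Finset.prod_mul_distrib]
  refine Finset.prod_congr rfl fun i _ => ?_
  cases x i <;> cases y i <;> simp [← sq, hz]

theorem sq_sum_smul_mul_boolMonomial [DecidableEq ι] {A R : Type*} [CommSemiring A] [CommRing R]
    [Algebra A R] (a : ι → A) {z : ι → R} (hz : ∀ i, z i ^ 2 = 1) (x : ι → Bool) :
    (∑ i, a i • z i) ^ 2 * boolMonomial x z =
      (∑ i, a i ^ 2) • boolMonomial x z +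
        (2 : A) • ∑ y with hammingDist x y = 2, (∏ i with x i ≠ y i, a i) • boolMonomial y z := by
  have squares : ∑ i, (a i • z i) ^ 2 = (∑ i, a i ^ 2) • (1 : R) := by
    simp only [smul_pow, hz, Finset.sum_smul]
  have pairs :
      (∑ y with hammingDist x y = 2, ∏ i with x i ≠ y i, a i • z i) * boolMonomial x z =
        ∑ y with hammingDist x y = 2, (∏ i with x i ≠ y i, a i) • boolMonomial y z := by
    simp only [Finset.sum_mul, Finset.prod_smul, smul_mul_assoc, prod_ne_mul_boolMonomial hz]
  rw [sq_sum_eq_sum_sq_add_two_mul_sum_powersetCard,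
    ← sum_hammingDist_eq_sum_powersetCard 2 x fun t => ∏ i ∈ t, a i • z i, squares, add_mul,
    mul_assoc, pairs, smul_one_mul, two_smul, two_mul]

end BoolMonomial

theorem sum_incidenceFinset_eq_sum_neighborFinset {V M : Type*} [DecidableEq V] [AddCommMonoid M]
    (G : SimpleGraph V) (u : V) [Fintype (G.neighborSet u)] (F : Sym2 V → M) :
    ∑ e ∈ G.incidenceFinset u, F e = ∑ w ∈ G.neighborFinset u, F s(u, w) := by
  symm
  refine Finset.sum_nbij (fun w => s(u, w)) ?_ ?_ ?_ fun _ _ => rfl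
  · intro w hw
    simpa using hw
  · exact fun _ _ _ _ h => Sym2.congr_right.1 h
  · intro e he
    have ⟨hedge, hmem⟩ : e ∈ G.edgeSet ∧ u ∈ e := by
      simpa [SimpleGraph.incidenceSet] using he
    obtain ⟨w, rfl⟩ := hmem
    exact ⟨w, by simpa using hedge, rfl⟩

section BasisStates

variable {V : Type*}

/-- The Pauli operator `Z_v` as the function sending a computational basis state to the
corresponding eigenvalue. -/
def zEigenvalue (v : V) (s : V → Bool) : ℂ :=
  if s v then -1 else 1

theorem zEigenvalue_sq (v : V) : zEigenvalue v ^ 2 = 1 := by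
  funext s
  cases h : s v <;> simp [zEigenvalue, h]

/-- The diagonal of the Hamiltonian `H_p`, as a function of the computational basis state. -/
noncomputable def isingEnergy (G : SimpleGraph V) [Fintype G.edgeSet] (r : Sym2 V → ℝ) :
    (V → Bool) → ℂ :=
  ∑ e ∈ G.edgeFinset, (r e : ℂ) • (e.map zEigenvalue).mul

variable [DecidableEq V]

/-- The action of the Pauli operator `X_u` on computational basis states. -/
def flipBit (u : V) (s : V → Bool) : V → Bool :=
  Function.update s u (!s u)

theorem zEigenvalue_flipBit_self (u : V) (s : V → Bool) :
    zEigenvalue u (flipBit u s) = -zEigenvalue u s := by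
  cases h : s u <;> simp [zEigenvalue, flipBit, h]

theorem zEigenvalue_flipBit_of_ne {u v : V} (h : v ≠ u) (s : V → Bool) :
    zEigenvalue v (flipBit u s) = zEigenvalue v s := by
  simp [zEigenvalue, flipBit, h]

theorem mul_map_zEigenvalue_flipBit_of_notMem {u : V} {e : Sym2 V} (h : u ∉ e) (s : V → Bool) :
    (e.map zEigenvalue).mul (flipBit u s) = (e.map zEigenvalue).mul s := by
  induction e with
  | _ a b =>
    obtain ⟨ha, hb⟩ : u ≠ a ∧ u ≠ b := by simpa using h
    simp [zEigenvalue_flipBit_of_ne ha.symm, zEigenvalue_flipBit_of_ne hb.symm]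

theorem isingEnergy_comp_flipBit_sub (G : SimpleGraph V) [Fintype G.edgeSet] (r : Sym2 V → ℝ)
    (u : V) [Fintype (G.neighborSet u)] :
    isingEnergy G r ∘ flipBit u - isingEnergy G r =
      -2 * zEigenvalue u * ∑ w ∈ G.neighborFinset u, (r s(u, w) : ℂ) • zEigenvalue w := by
  funext s
  simp only [isingEnergy, Pi.sub_apply, Function.comp_apply, Finset.sum_apply, Pi.smul_apply,
    Pi.mul_apply, Pi.neg_apply, Pi.ofNat_apply, smul_eq_mul]
  rw [← Finset.sum_sub_distrib, ← Finset.sum_subset (G.incidenceFinset_subset u),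
    sum_incidenceFinset_eq_sum_neighborFinset, Finset.mul_sum]
  · refine Finset.sum_congr rfl fun w hw => ?_
    have hne : w ≠ u := ((G.mem_neighborFinset u w).1 hw).ne'
    simp only [Sym2.map_mk, Sym2.mul_mk, Pi.mul_apply, zEigenvalue_flipBit_self,
      zEigenvalue_flipBit_of_ne hne]
    ring
  · intro e he hninc
    have hnotMem : u ∉ e := fun hmem => hninc <| by
      simpa [SimpleGraph.incidenceSet] using And.intro (SimpleGraph.mem_edgeFinset.1 he) hmem
    rw [mul_map_zEigenvalue_flipBit_of_notMem hnotMem, sub_self]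

end BasisStates

section PauliOperators

variable {V : Type*} [Fintype V] [DecidableEq V]

theorem PZZ_eq_diagonal (e : Sym2 V) : PZZ e = Matrix.diagonal (e.map zEigenvalue).mul := by
  induction e with
  | _ a b => exact Matrix.diagonal_mul_diagonal _ _

theorem HpW_eq_diagonal (G : SimpleGraph V) [DecidableRel G.Adj] (r : Sym2 V → ℝ) :
    HpW G r = Matrix.diagonal (isingEnergy G r) := by
  simp only [HpW, isingEnergy, PZZ_eq_diagonal, ← Matrix.diagonal_smul]
  exact (map_sum (Matrix.diagonalAddMonoidHom (V → Bool) ℂ) _ _).symm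

/-- The operator `X_u · diag g`, as a linear function of `g`; all the stars centred at `u` have this
form. -/
noncomputable def pauliXDiagonal (u : V) :
    ((V → Bool) → ℂ) →ₗ[ℂ] Matrix (V → Bool) (V → Bool) ℂ :=
  LinearMap.mulLeft ℂ (PX u) ∘ₗ Matrix.diagonalLinearMap (V → Bool) ℂ ℂ

theorem evenStar_eq_pauliXDiagonal (u : V) {d : ℕ} (nbr : Fin d → V) (x : Fin d → Bool) :
    evenStar u nbr x = pauliXDiagonal u (boolMonomial x fun i => zEigenvalue (nbr i)) := by
  refine congrArg (fun g => PX u * Matrix.diagonal g) (funext fun s => ?_)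
  simp only [boolMonomial, Finset.prod_apply, apply_ite (fun g : (V → Bool) → ℂ => g s),
    zEigenvalue, Pi.one_apply]

theorem pauliXDiagonal_apply (u : V) (g : (V → Bool) → ℂ) (s t : V → Bool) :
    pauliXDiagonal u g s t = if s = flipBit u t then g t else 0 := by
  have PX_apply : PX u s t = if s = flipBit u t then 1 else 0 := rfl
  simp [pauliXDiagonal, PX_apply]

theorem diagonal_lie_pauliXDiagonal (h : (V → Bool) → ℂ) (u : V) (g : (V → Bool) → ℂ) :
    ⁅Matrix.diagonal h, pauliXDiagonal u g⁆ = pauliXDiagonal u ((h ∘ flipBit u - h) * g) := by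
  ext s t
  simp only [Ring.lie_def, Matrix.sub_apply, Matrix.diagonal_mul, Matrix.mul_diagonal,
    pauliXDiagonal_apply]
  split_ifs with hst
  · simp only [hst, Pi.mul_apply, Pi.sub_apply, Function.comp_apply]
    ring
  · simp

theorem inv_four_smul_HpW_lie_lie_pauliXDiagonal (G : SimpleGraph V) [DecidableRel G.Adj]
    (r : Sym2 V → ℝ) (u : V) (g : (V → Bool) → ℂ) :
    (4 : ℂ)⁻¹ • ⁅HpW G r, ⁅HpW G r, pauliXDiagonal u g⁆⁆ =
      pauliXDiagonal u ((∑ w ∈ G.neighborFinset u, (r s(u, w) : ℂ) • zEigenvalue w) ^ 2 * g) := by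
  have square (S : (V → Bool) → ℂ) :
      -2 * zEigenvalue u * S * (-2 * zEigenvalue u * S * g) = (4 : ℂ) • (S ^ 2 * g) := calc
    _ = 4 * zEigenvalue u ^ 2 * (S ^ 2 * g) := by ring
    _ = (4 : ℂ) • (S ^ 2 * g) := by rw [zEigenvalue_sq, mul_one, Algebra.smul_def, map_ofNat]
  rw [HpW_eq_diagonal, diagonal_lie_pauliXDiagonal, diagonal_lie_pauliXDiagonal,
    isingEnergy_comp_flipBit_sub, square, map_smul, inv_smul_smul₀ (by norm_num)]

end PauliOperators

theorem stmt_9_general {V : Type*} [Fintype V] [DecidableEq V] (G : SimpleGraph V)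
    [DecidableRel G.Adj] (r : Sym2 V → ℝ) (u : V) (d : ℕ) (nbr : Fin d → V)
    (hinj : Function.Injective nbr)
    (hnbr : ∀ w : V, G.Adj u w ↔ ∃ i, nbr i = w)
    (x : Fin d → Bool) :
    (4 : ℂ)⁻¹ • ⁅HpW G r, ⁅HpW G r, evenStar u nbr x⁆⁆
      = (∑ i : Fin d, ((r s(u, nbr i) : ℂ)) ^ 2) • evenStar u nbr x
        + (2 : ℂ) •
            ∑ y ∈ Finset.univ.filter
                (fun y : Fin d → Bool => (Finset.univ.filter fun i => x i ≠ y i).card = 2),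
              (∏ i : Fin d, if x i ≠ y i then (r s(u, nbr i) : ℂ) else 1) •
                evenStar u nbr y := by
  have neighbors : G.neighborFinset u = Finset.univ.map ⟨nbr, hinj⟩ := by
    ext w
    simp [hnbr]
  rw [evenStar_eq_pauliXDiagonal, inv_four_smul_HpW_lie_lie_pauliXDiagonal, neighbors,
    Finset.sum_map]
  simp only [Function.Embedding.coeFn_mk]
  rw [sq_sum_smul_mul_boolMonomial _ (fun i => zEigenvalue_sq (nbr i))]
  simp only [map_add, map_smul, map_sum, evenStar_eq_pauliXDiagonal, Finset.prod_filter,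
    hammingDist]

/-- for a vertex `u` with neighbors `nbr 0, …, nbr (d-1)` and an even
weight vector `x`, with `f(M) = (1/4)[H_p, [H_p, M]]`,
`f(S^u_x) = c_{xx} S^u_x + 2 Σ_{y : |x⊕y| = 2} c_{xy} S^u_y`,
where `c_{xx} = Σ_i r_{u,nbr i}²` and `c_{xy} = Π_i r_{u, nbr i}^{x_i ⊕ y_i}`. -/
theorem stmt_9 {V : Type*} [Fintype V] [DecidableEq V] (G : SimpleGraph V)
    [DecidableRel G.Adj] (r : Sym2 V → ℝ) (u : V) (d : ℕ) (nbr : Fin d → V)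
    (hinj : Function.Injective nbr)
    (hnbr : ∀ w : V, G.Adj u w ↔ ∃ i, nbr i = w)
    (x : Fin d → Bool)
    (hx : Even ((Finset.univ.filter fun i => x i = true).card)) :
    (4 : ℂ)⁻¹ • ⁅HpW G r, ⁅HpW G r, evenStar u nbr x⁆⁆
      = (∑ i : Fin d, ((r s(u, nbr i) : ℂ)) ^ 2) • evenStar u nbr x
        + (2 : ℂ) •
            ∑ y ∈ Finset.univ.filter
                (fun y : Fin d → Bool => (Finset.univ.filter fun i => x i ≠ y i).card = 2),
              (∏ i : Fin d, if x i ≠ y i then (r s(u, nbr i) : ℂ) else 1) •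
                evenStar u nbr y :=
  stmt_9_general G r u d nbr hinj hnbr x
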